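/- Assume char k = 5. Let F be a nonzero homogeneous polynomial of degree 3 in k[x₀,x₁,x₂,x₃] such that the cubic surface V(F) is smooth. If A ∈ GL₄(k) satisfies A⁵ = I and A leaves V(F) invariant, then A = I. (Equivalently: in characteristic 5 there is no smooth cubic surface admitting a projective automorphism of order 5.) -/

import Mathlib

open MvPolynomial Matrix

/-- The polynomial `F(A·x)`, obtained from `F` by substituting
`xᵢ ↦ ∑ⱼ Aᵢⱼ xⱼ`. -/
noncomputable def substMatrix {k : Type*} [Field k] (A : Matrix (Fin 4) (Fin 4) k)
    (F : MvPolynomial (Fin 4) k) : MvPolynomial (Fin 4) k :=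
  aeval (fun i => ∑ j, C (A i j) * X j) F

/-- A matrix `A` leaves the cubic surface `V(F)` invariant if `F(A·x) = λ·F(x)`
for some `λ ∈ kˣ`. -/
def LeavesInvariant {k : Type*} [Field k] (A : Matrix (Fin 4) (Fin 4) k)
    (F : MvPolynomial (Fin 4) k) : Prop :=
  ∃ lam : kˣ, substMatrix A F = (lam : k) • F

/-!
Let `N = A - 1`. In characteristic `5`, `A ^ 5 = 1` makes `N` nilpotent, so `N ^ 4 = 0` by size;
from then on only the invertibility of `6` matters.

Let `T` be the symmetric trilinear form with `T x x x = 6 F(x)`; smoothness says that `T x x` is a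
nonzero functional for every `x ≠ 0`. If `N ≠ 0`, choose `m` with `N ^ m ≠ 0` and `N ^ (m + 1) = 0`,
so that `1 ≤ m ≤ 3`; vectors `e = N ^ m x` are fixed by `A`. For `e ≠ 0` the functional `T e e` is
scaled by the unipotent `A`, so the scaling factor is `1` and `T` is `A`-invariant. Invariance of
`T e` then lets powers of `N` move from one argument to the other, up to sign. Hence
`Q(x, y, z) = T (N ^ m x) (N ^ m y) z`, which is symmetric in `x, y`, equals `(-1) ^ m Q(x, z, y)`.
If `m` is odd this gives `2 Q = 0`; if `m = 2`, expanding the invariance of `T` at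
`(N x, N y, N z)` gives `3 Q = 0`. Either way `T e e = 0`, contradicting smoothness.
-/

lemma exists_pow_ne_zero_pow_succ_eq_zero {M₀ : Type*} [MonoidWithZero M₀] {a : M₀} {n : ℕ}
    (ha : a ≠ 0) (hn : a ^ n = 0) : ∃ m, m ≠ 0 ∧ m < n ∧ a ^ m ≠ 0 ∧ a ^ (m + 1) = 0 := by
  have : Nontrivial M₀ := nontrivial_of_ne a 0 ha
  obtain ⟨m, hm⟩ := Nat.exists_eq_succ_of_ne_zero (pos_nilpotencyClass_iff.mpr ⟨n, hn⟩).ne'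
  obtain ⟨hsucc, hpow⟩ := nilpotencyClass_eq_succ_iff.mp hm
  refine ⟨m, ?_, lt_of_not_ge fun h => hpow (pow_eq_zero_of_le h hn), hpow, hsucc⟩
  rintro rfl
  exact ha (by simpa using hsucc)

section Bilinear

variable {R V M : Type*} [CommRing R] [AddCommGroup V] [Module R V] [AddCommGroup M] [Module R M]
  {β : V →ₗ[R] V →ₗ[R] M} {N : Module.End R V}

lemma apply_pow_apply_eq_zero {m : ℕ} (hN : N ^ (m + 1) = 0) (x : V) : N ((N ^ m) x) = 0 := by
  rw [← Module.End.mul_apply, ← pow_succ', hN, LinearMap.zero_apply]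

lemma one_add_pow_apply_of_apply_eq_zero {v : V} (hv : N v = 0) (i : ℕ) :
    ((1 + N) ^ i) v = v := by
  induction i with
  | zero => simp
  | succ i ih => simpa [pow_succ, hv] using ih

lemma apply_pow_one_add_pow_of_invariant
    (hβ : ∀ x y, β ((1 + N) x) ((1 + N) y) = β x y) (i : ℕ) (x y : V) :
    β ((N ^ i) x) (((1 + N) ^ i) y) = (-1 : R) ^ i • β x ((N ^ i) y) := by
  have move (x y : V) : β (N x) ((1 + N) y) = -β x (N y) := by
    calc β (N x) ((1 + N) y)
        = β ((1 + N) x) ((1 + N) y) - β x ((1 + N) y) := by simp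
      _ = -β x (N y) := by rw [hβ]; simp
  induction i generalizing x y with
  | zero => simp
  | succ i ih =>
    have comm : N * (1 + N) ^ i = (1 + N) ^ i * N :=
      (((Commute.one_right N).add_right (Commute.refl N)).pow_right i)
    calc β ((N ^ (i + 1)) x) (((1 + N) ^ (i + 1)) y)
        = β (N ((N ^ i) x)) ((1 + N) (((1 + N) ^ i) y)) := by
          simp only [pow_succ', Module.End.mul_apply]
      _ = -β ((N ^ i) x) (((1 + N) ^ i) (N y)) := by
          rw [move, ← Module.End.mul_apply, comm, Module.End.mul_apply]
      _ = (-1 : R) ^ (i + 1) • β x ((N ^ (i + 1)) y) := by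
          rw [ih, ← Module.End.mul_apply, ← pow_succ, pow_succ (-1 : R), mul_neg_one, neg_smul]

lemma apply_pow_apply_pow_of_invariant
    (hβ : ∀ x y, β ((1 + N) x) ((1 + N) y) = β x y) {i j : ℕ} (hN : N ^ (i + j + 1) = 0) (x y : V) :
    β ((N ^ i) x) ((N ^ j) y) = (-1 : R) ^ i • β x ((N ^ (i + j)) y) := by
  have unit : IsUnit ((1 + N) ^ i) := (IsNilpotent.isUnit_one_add ⟨_, hN⟩).pow i
  obtain ⟨y, rfl⟩ := ((Module.End.isUnit_iff _).mp unit).surjective y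
  have comm (n : ℕ) : Commute (N ^ n) ((1 + N) ^ i) :=
    ((Commute.one_right N).add_right (Commute.refl N)).pow_pow n i
  have fixed : ((1 + N) ^ i) ((N ^ (i + j)) y) = (N ^ (i + j)) y :=
    one_add_pow_apply_of_apply_eq_zero (apply_pow_apply_eq_zero hN y) i
  rw [← Module.End.mul_apply, (comm j).eq, Module.End.mul_apply,
    apply_pow_one_add_pow_of_invariant hβ, ← Module.End.mul_apply (N ^ i), ← pow_add,
    ← Module.End.mul_apply, (comm _).eq, Module.End.mul_apply, fixed]

lemma apply_pow_apply_pow_eq_zero_of_invariant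
    (hβ : ∀ x y, β ((1 + N) x) ((1 + N) y) = β x y) {i j : ℕ} (hN : N ^ (i + j) = 0) (x y : V) :
    β ((N ^ i) x) ((N ^ j) y) = 0 := by
  rw [apply_pow_apply_pow_of_invariant hβ (by rw [pow_succ, hN, zero_mul]), hN,
    LinearMap.zero_apply, map_zero, smul_zero]

end Bilinear

lemma eq_one_of_apply_one_add_eq_mul {R V : Type*} [CommRing R] [IsDomain R] [AddCommGroup V]
    [Module R V] {f : V →ₗ[R] R} (hf : f ≠ 0) {N : Module.End R V} (hN : IsNilpotent N) {c : R}
    (h : ∀ x, f ((1 + N) x) = c * f x) : c = 1 := by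
  have step (x : V) : f (N x) = (c - 1) * f x := by
    linear_combination (by simpa using h x : f x + f (N x) = c * f x)
  have iterate (n : ℕ) (x : V) : f ((N ^ n) x) = (c - 1) ^ n * f x := by
    induction n with
    | zero => simp
    | succ n ih => rw [pow_succ', Module.End.mul_apply, step, ih, pow_succ']; ring
  obtain ⟨n, hn⟩ := hN
  obtain ⟨x, hx⟩ : ∃ x, f x ≠ 0 := by simpa using DFunLike.ne_iff.mp hf
  have h0 : (c - 1) ^ n * f x = 0 := by simp [← iterate, hn]
  exact sub_eq_zero.mp (eq_zero_of_pow_eq_zero ((mul_eq_zero.mp h0).resolve_right hx))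

lemma apply_pow_invariant {R V M : Type*} [CommRing R] [AddCommGroup V] [Module R V]
    [AddCommGroup M] [Module R M] {T : V →ₗ[R] V →ₗ[R] V →ₗ[R] M} {N : Module.End R V}
    (hinv : ∀ x y z, T ((1 + N) x) ((1 + N) y) ((1 + N) z) = T x y z)
    {m : ℕ} (hN : N ^ (m + 1) = 0) (x y z : V) :
    T ((N ^ m) x) ((1 + N) y) ((1 + N) z) = T ((N ^ m) x) y z := by
  simpa [apply_pow_apply_eq_zero hN] using hinv ((N ^ m) x) y z

/-- A trilinear map invariant under all permutations of its arguments, expressed by the two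
transpositions generating them. -/
structure IsSymmTrilinear {R V M : Type*} [CommRing R] [AddCommGroup V] [Module R V]
    [AddCommGroup M] [Module R M] (T : V →ₗ[R] V →ₗ[R] V →ₗ[R] M) : Prop where
  swap_left : ∀ x y z, T x y z = T y x z
  swap_right : ∀ x y z, T x y z = T x z y

namespace IsSymmTrilinear

section CommRing

variable {R V M : Type*} [CommRing R] [AddCommGroup V] [Module R V] [AddCommGroup M] [Module R M]
  {T : V →ₗ[R] V →ₗ[R] V →ₗ[R] M} {N : Module.End R V}

lemma polarization (hT : IsSymmTrilinear T) (x y z : V) :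
    (6 : R) • T x y z = T (x + y + z) (x + y + z) (x + y + z)
      - T (x + y) (x + y) (x + y) - T (x + z) (x + z) (x + z) - T (y + z) (y + z) (y + z)
      + T x x x + T y y y + T z z z := by
  simp only [map_add, LinearMap.add_apply]
  rw [hT.swap_right x z y, hT.swap_left y x z, hT.swap_right y z x, hT.swap_left y x z,
    hT.swap_left z x y, hT.swap_right x z y, hT.swap_left z y x, hT.swap_right y z x,
    hT.swap_left y x z]
  module

lemma two_smul_apply_pow_apply_pow_of_odd (hT : IsSymmTrilinear T)
    (hinv : ∀ x y z, T ((1 + N) x) ((1 + N) y) ((1 + N) z) = T x y z)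
    {m : ℕ} (hm : Odd m) (hN : N ^ (m + 1) = 0) (x y z : V) :
    (2 : R) • T ((N ^ m) x) ((N ^ m) y) z = 0 := by
  have symm (x y z : V) : T ((N ^ m) x) ((N ^ m) y) z = T ((N ^ m) y) ((N ^ m) x) z :=
    hT.swap_left _ _ _
  have anti (x y z : V) : T ((N ^ m) x) ((N ^ m) y) z = -T ((N ^ m) x) ((N ^ m) z) y := by
    have h := apply_pow_apply_pow_of_invariant (apply_pow_invariant hinv hN x) (i := m) (j := 0)
      hN y z
    simpa [hm.neg_one_pow, hT.swap_right _ y] using h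
  have neg_self : T ((N ^ m) x) ((N ^ m) y) z = -T ((N ^ m) x) ((N ^ m) y) z :=
    calc T ((N ^ m) x) ((N ^ m) y) z
        = -T ((N ^ m) z) ((N ^ m) x) y := by rw [anti, symm]
      _ = T ((N ^ m) y) ((N ^ m) z) x := by rw [anti, neg_neg, symm]
      _ = -T ((N ^ m) x) ((N ^ m) y) z := by rw [anti, symm]
  rw [two_smul]
  exact add_eq_zero_iff_eq_neg.mpr neg_self

lemma three_smul_apply_sq_apply_sq (hT : IsSymmTrilinear T)
    (hinv : ∀ x y z, T ((1 + N) x) ((1 + N) y) ((1 + N) z) = T x y z)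
    (hN : N ^ 3 = 0) (x y z : V) :
    (3 : R) • T ((N ^ 2) x) ((N ^ 2) y) z = 0 := by
  have hβ := apply_pow_invariant hinv hN
  have swap (x y z : V) : T ((N ^ 2) x) ((N ^ 2) y) z = T ((N ^ 2) x) ((N ^ 2) z) y := by
    have h := apply_pow_apply_pow_of_invariant (hβ x) (i := 2) (j := 0) hN y z
    simpa [hT.swap_right _ y] using h
  have spread (x y z : V) : T ((N ^ 2) x) (N y) (N z) = -T ((N ^ 2) x) ((N ^ 2) y) z := by
    have h := apply_pow_apply_pow_of_invariant (hβ x) (i := 1) (j := 1) hN y z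
    simpa [swap x y z, hT.swap_right _ y] using h
  have vanish (x y z : V) : T ((N ^ 2) x) ((N ^ 2) y) (N z) = 0 := by
    simpa using apply_pow_apply_pow_eq_zero_of_invariant (hβ x) (i := 2) (j := 1) hN y z
  have spread_mid : T (N x) ((N ^ 2) y) (N z) = -T ((N ^ 2) x) ((N ^ 2) y) z := by
    rw [hT.swap_left, spread, hT.swap_left]
  have spread_right : T (N x) (N y) ((N ^ 2) z) = -T ((N ^ 2) x) ((N ^ 2) y) z := by
    rw [hT.swap_right, hT.swap_left, spread, hT.swap_left, swap]
  have vanish_mid (x y z : V) : T ((N ^ 2) x) (N y) ((N ^ 2) z) = 0 := by rw [hT.swap_right, vanish]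
  have vanish_left : T (N x) ((N ^ 2) y) ((N ^ 2) z) = 0 := by rw [hT.swap_left, vanish_mid]
  have sq (v : V) : N (N v) = (N ^ 2) v := by rw [pow_two, Module.End.mul_apply]
  have vanish_all : T ((N ^ 2) x) ((N ^ 2) y) ((N ^ 2) z) = 0 := by
    rw [← sq z, vanish]
  have expand := hinv (N x) (N y) (N z)
  simp only [LinearMap.add_apply, Module.End.one_apply, map_add, sq, spread, spread_mid,
    spread_right, vanish, vanish_mid, vanish_left, vanish_all] at expand
  linear_combination (norm := module) (-1 : R) • expand

end CommRing

section Field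

variable {k V : Type*} [Field k] [AddCommGroup V] [Module k V]
  {T : V →ₗ[k] V →ₗ[k] V →ₗ[k] k}

lemma apply_apply_apply_eq_mul (hT : IsSymmTrilinear T) (h6 : (6 : k) ≠ 0) {g : Module.End k V}
    {c : k} (hg : ∀ x, T (g x) (g x) (g x) = c * T x x x) (x y z : V) :
    T (g x) (g y) (g z) = c * T x y z := by
  apply mul_left_cancel₀ h6
  have hgxyz := hT.polarization (g x) (g y) (g z)
  simp only [← map_add g, hg, smul_eq_mul] at hgxyz
  rw [hgxyz]
  linear_combination -c * hT.polarization x y z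

lemma apply_pow_apply_pow_eq_zero (hT : IsSymmTrilinear T) (h6 : (6 : k) ≠ 0)
    {N : Module.End k V} (hinv : ∀ x y z, T ((1 + N) x) ((1 + N) y) ((1 + N) z) = T x y z)
    {m : ℕ} (hm0 : m ≠ 0) (hm : m < 4) (hN : N ^ (m + 1) = 0) (x y z : V) :
    T ((N ^ m) x) ((N ^ m) y) z = 0 := by
  have h23 : (2 : k) * 3 ≠ 0 := by norm_num [h6]
  rcases Nat.even_or_odd m with even | odd
  · obtain rfl : m = 2 := by
      obtain ⟨r, rfl⟩ := even
      lia
    exact (smul_eq_zero.mp (hT.three_smul_apply_sq_apply_sq hinv hN x y z)).resolve_left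
      (right_ne_zero_of_mul h23)
  · exact (smul_eq_zero.mp (hT.two_smul_apply_pow_apply_pow_of_odd hinv odd hN x y z)).resolve_left
      (left_ne_zero_of_mul h23)

lemma eq_zero_of_apply_one_add_eq_mul (hT : IsSymmTrilinear T) (h6 : (6 : k) ≠ 0)
    (hsmooth : ∀ x, T x x = 0 → x = 0) {N : Module.End k V} (hN : N ^ 4 = 0) {c : k}
    (hc : ∀ x y z, T ((1 + N) x) ((1 + N) y) ((1 + N) z) = c * T x y z) : N = 0 := by
  by_contra hN0
  obtain ⟨m, hm0, hm4, hNm0, hNm⟩ := exists_pow_ne_zero_pow_succ_eq_zero hN0 hN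
  obtain ⟨x, hx⟩ : ∃ x, (N ^ m) x ≠ 0 := by simpa using DFunLike.ne_iff.mp hNm0
  have hc1 : c = 1 := eq_one_of_apply_one_add_eq_mul (mt (hsmooth _) hx) ⟨4, hN⟩ fun z => by
    simpa [apply_pow_apply_eq_zero hNm] using hc ((N ^ m) x) ((N ^ m) x) z
  have hinv (x y z : V) : T ((1 + N) x) ((1 + N) y) ((1 + N) z) = T x y z := by
    rw [hc, hc1, one_mul]
  exact hx (hsmooth _ (LinearMap.ext fun z =>
    hT.apply_pow_apply_pow_eq_zero h6 hinv hm0 hm4 hNm x x z))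

end Field

end IsSymmTrilinear

section Polarization

lemma eval_eq_constantCoeff_of_isHomogeneous_zero {σ R : Type*} [CommSemiring R]
    {F : MvPolynomial σ R} (hF : F.IsHomogeneous 0) (x : σ → R) : eval x F = constantCoeff F := by
  have h := totalDegree_eq_zero_iff_eq_C.mp (totalDegree_zero_iff_isHomogeneous (p := F) |>.mpr hF)
  rw [h, eval_C, constantCoeff_C]

variable {σ R : Type*} [Fintype σ] [CommRing R]

/-- The directional derivative `∑ i, v i • ∂/∂xᵢ` along `v`, as a linear function of `v`. -/
noncomputable def dirDeriv :
    (σ → R) →ₗ[R] Derivation R (MvPolynomial σ R) (MvPolynomial σ R) :=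
  Fintype.linearCombination R fun i => pderiv i

lemma dirDeriv_apply (v : σ → R) (F : MvPolynomial σ R) :
    dirDeriv v F = ∑ i, v i • pderiv i F := by
  change Derivation.coeFnAddMonoidHom (Fintype.linearCombination R (fun i => pderiv i) v) F = _
  simp [Fintype.linearCombination_apply, map_sum]

lemma dirDeriv_single [DecidableEq σ] (i : σ) :
    dirDeriv (Pi.single i (1 : R)) = pderiv i := by
  simp [dirDeriv]

lemma dirDeriv_X (v : σ → R) (i : σ) : dirDeriv v (X i) = C (v i) := by
  classical simp [dirDeriv_apply, pderiv_X, Pi.single_apply, smul_eq_C_mul]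

lemma dirDeriv_comm (v w : σ → R) (F : MvPolynomial σ R) :
    dirDeriv v (dirDeriv w F) = dirDeriv w (dirDeriv v F) := by
  have h : ⁅dirDeriv v, dirDeriv w⁆ = 0 := derivation_ext fun i => by
    simp [Derivation.commutator_apply, dirDeriv_X, derivation_C]
  exact sub_eq_zero.mp (by simpa [Derivation.commutator_apply] using DFunLike.congr_fun h F)

lemma isHomogeneous_dirDeriv {F : MvPolynomial σ R} {n : ℕ} (hF : F.IsHomogeneous n)
    (v : σ → R) : (dirDeriv v F).IsHomogeneous (n - 1) := by
  rw [dirDeriv_apply]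
  exact IsHomogeneous.sum _ _ _ fun i _ => (homogeneousSubmodule σ R _).smul_mem (v i) hF.pderiv

lemma eval_dirDeriv_self {F : MvPolynomial σ R} {n : ℕ} (hF : F.IsHomogeneous n)
    (x : σ → R) : eval x (dirDeriv x F) = n * eval x F := by
  simpa [dirDeriv_apply] using congrArg (eval x) hF.sum_X_mul_pderiv

/-- The trilinear form of third directional derivatives of `F` at the origin; for a cubic form `F`
this is the polarization normalized by `T x x x = 6 F(x)`. -/
noncomputable def polarForm (F : MvPolynomial σ R) :
    (σ → R) →ₗ[R] (σ → R) →ₗ[R] (σ → R) →ₗ[R] R :=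
  LinearMap.mk₂ R
    (fun x y => lcoeff R 0 ∘ₗ (dirDeriv x).toLinearMap ∘ₗ (dirDeriv y).toLinearMap ∘ₗ
      Fintype.linearCombination R fun i => pderiv i F)
    (fun x x' y => by ext; simp) (fun c x y => by ext; simp)
    (fun x y y' => by ext; simp) (fun c x y => by ext; simp)

lemma polarForm_apply (F : MvPolynomial σ R) (x y z : σ → R) :
    polarForm F x y z = constantCoeff (dirDeriv x (dirDeriv y (dirDeriv z F))) := by
  rw [dirDeriv_apply z, ← Fintype.linearCombination_apply]
  rfl

lemma isSymmTrilinear_polarForm (F : MvPolynomial σ R) : IsSymmTrilinear (polarForm F) where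
  swap_left x y z := by rw [polarForm_apply, dirDeriv_comm, ← polarForm_apply]
  swap_right x y z := by rw [polarForm_apply, dirDeriv_comm y, ← polarForm_apply]

lemma polarForm_self_left {F : MvPolynomial σ R} (hF : F.IsHomogeneous 3) (x y : σ → R) :
    polarForm F x x y = 2 * eval x (dirDeriv y F) := by
  have h2 : (dirDeriv y F).IsHomogeneous 2 := isHomogeneous_dirDeriv hF y
  have h1 : (dirDeriv x (dirDeriv y F)).IsHomogeneous 1 := isHomogeneous_dirDeriv h2 x
  have h0 : (dirDeriv x (dirDeriv x (dirDeriv y F))).IsHomogeneous 0 := isHomogeneous_dirDeriv h1 x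
  rw [polarForm_apply, ← eval_eq_constantCoeff_of_isHomogeneous_zero h0 x, eval_dirDeriv_self h1,
    eval_dirDeriv_self h2]
  simp

lemma polarForm_self {F : MvPolynomial σ R} (hF : F.IsHomogeneous 3) (x : σ → R) :
    polarForm F x x x = 6 * eval x F := by
  rw [polarForm_self_left hF, eval_dirDeriv_self hF]
  push_cast
  ring

end Polarization

lemma eq_zero_of_polarForm_self_left_eq_zero {σ k : Type*} [Fintype σ] [Field k]
    (h6 : (6 : k) ≠ 0) {F : MvPolynomial σ k} (hF : F.IsHomogeneous 3)
    (hsmooth : ∀ x : σ → k, eval x F = 0 → (∀ i, eval x (pderiv i F) = 0) → x = 0)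
    {x : σ → k} (hx : polarForm F x x = 0) : x = 0 := by
  classical
  have h2 : (2 : k) ≠ 0 := left_ne_zero_of_mul (b := 3) (by norm_num [h6])
  refine hsmooth x ?_ fun i => ?_
  · have h := polarForm_self hF x
    rw [hx, LinearMap.zero_apply] at h
    exact (mul_eq_zero.mp h.symm).resolve_left h6
  · have h := polarForm_self_left hF x (Pi.single i 1)
    rw [hx, LinearMap.zero_apply, dirDeriv_single] at h
    exact (mul_eq_zero.mp h.symm).resolve_left h2

lemma eval_substMatrix {k : Type*} [Field k] (A : Matrix (Fin 4) (Fin 4) k)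
    (F : MvPolynomial (Fin 4) k) (x : Fin 4 → k) :
    eval x (substMatrix A F) = eval (A *ᵥ x) F := by
  have coords : (fun i => eval x (∑ j, C (A i j) * X j)) = A *ᵥ x := by
    ext i
    simp [mulVec, dotProduct]
  have coeffs : (eval x).comp (algebraMap k (MvPolynomial (Fin 4) k)) = RingHom.id k := by
    ext
    simp [algebraMap_eq]
  rw [substMatrix, aeval_def, eval_eval₂, coeffs, coords]
  rfl

lemma pow_card_eq_zero_of_isNilpotent {n R : Type*} [Fintype n] [DecidableEq n] [CommRing R]
    [IsDomain R] {N : Matrix n n R} (hN : IsNilpotent N) : N ^ Fintype.card n = 0 := by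
  have charpoly_eq : N.charpoly = Polynomial.X ^ Fintype.card n :=
    sub_eq_zero.mp (isNilpotent_charpoly_sub_pow_of_isNilpotent hN).eq_zero
  simpa [charpoly_eq] using N.aeval_self_charpoly

lemma sub_one_pow_card_eq_zero_of_pow_char_eq_one {n R : Type*} [Fintype n] [DecidableEq n]
    [CommRing R] [IsDomain R] {p : ℕ} [CharP R p] (hp : p.Prime) {A : Matrix n n R}
    (hA : A ^ p = 1) : (A - 1) ^ Fintype.card n = 0 := by
  have : Fact p.Prime := ⟨hp⟩
  cases isEmpty_or_nonempty n
  · exact Subsingleton.elim _ _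
  · exact pow_card_eq_zero_of_isNilpotent
      ⟨p, by rw [sub_pow_char_of_commute p (Commute.one_right A), hA, one_pow, sub_self]⟩

theorem stmt6_general {σ k : Type*} [Fintype σ] [DecidableEq σ] [Field k] (h6 : (6 : k) ≠ 0)
    {F : MvPolynomial σ k} (hF : F.IsHomogeneous 3)
    (hsmooth : ∀ x : σ → k, eval x F = 0 → (∀ i, eval x (pderiv i F) = 0) → x = 0)
    {A : Matrix σ σ k} (hA : (A - 1) ^ 4 = 0) {c : k}
    (hc : ∀ x, eval (A *ᵥ x) F = c * eval x F) : A = 1 := by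
  have hT := isSymmTrilinear_polarForm F
  have hN : toLin' (A - 1) ^ 4 = 0 := by rw [← toLin'_pow, hA, map_zero]
  have one_add : 1 + toLin' (A - 1) = toLin' A := by
    rw [map_sub, toLin'_one]; exact add_sub_cancel _ _
  have hinv := hT.apply_apply_apply_eq_mul h6 (g := toLin' A) (c := c) fun x => by
    rw [toLin'_apply, polarForm_self hF, polarForm_self hF, hc, mul_left_comm]
  rw [← one_add] at hinv
  have hN0 := hT.eq_zero_of_apply_one_add_eq_mul h6
    (fun x => eq_zero_of_polarForm_self_left_eq_zero h6 hF hsmooth) hN hinv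
  exact sub_eq_zero.mp (toLin'.map_eq_zero_iff.mp hN0)

/-- In characteristic `5` there is no smooth cubic surface
admitting a projective automorphism of order `5`: any `A ∈ GL₄(k)` with
`A⁵ = 1` leaving a smooth cubic surface invariant is the identity. -/
theorem stmt6 {k : Type*} [Field k] [IsAlgClosed k] (hchar : ringChar k = 5)
    (F : MvPolynomial (Fin 4) k) (hF0 : F ≠ 0) (hhom : F.IsHomogeneous 3)
    (hsmooth : ∀ x : Fin 4 → k,
      eval x F = 0 → (∀ i, eval x (pderiv i F) = 0) → x = 0)
    (A : Matrix (Fin 4) (Fin 4) k) (hA5 : A ^ 5 = 1)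
    (hinv : LeavesInvariant A F) :
    A = 1 := by
  have : CharP k 5 := hchar ▸ ringChar.charP k
  have h6 : (6 : k) ≠ 0 := by
    simpa using (CharP.cast_eq_zero_iff k 5 6).not.mpr (by norm_num)
  obtain ⟨lam, hlam⟩ := hinv
  exact stmt6_general h6 hhom hsmooth
    (sub_one_pow_card_eq_zero_of_pow_char_eq_one Nat.prime_five hA5) fun x => by
      rw [← eval_substMatrix, hlam, smul_eval]
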